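/- Let q be an odd positive integer with q < 2ⁿ, let j be the integer with 2^{j−1} ≤ q < 2^j, and define the utility vector m on [n+1] by m_i = 2^i for 1 ≤ i ≤ j−1, m_j = q, and m_i = 2^{i−1} for j+1 ≤ i ≤ n+1, with u(A) = ∑_{i∈A} m_i and induced order ≼_m. Let (A,B) be a critical pair for ≼_m. Then the following are equivalent: (a) (A,B) is flippable; (b) exactly one of A and B contains j; (c) u(B) − u(A) = 1. -/

import Mathlib

open Finset

/-- The strict part of a (total antisymmetric) order on subsets. -/
def cpLT {n : ℕ} (le : Finset (Fin n) → Finset (Fin n) → Prop)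
    (A B : Finset (Fin n)) : Prop :=
  le A B ∧ A ≠ B

/-- `le` is a comparative probability order on `[n]`: a linear (total,
antisymmetric, transitive) order on the powerset of `[n]` with `∅ ≺ A` for
nonempty `A`, satisfying de Finetti's axiom. -/
def IsCPO {n : ℕ} (le : Finset (Fin n) → Finset (Fin n) → Prop) : Prop :=
  (∀ A B, le A B ∨ le B A) ∧
  (∀ A B, le A B → le B A → A = B) ∧
  (∀ A B C, le A B → le B C → le A C) ∧
  (∀ A : Finset (Fin n), A ≠ ∅ → cpLT le ∅ A) ∧
  (∀ A B C : Finset (Fin n), Disjoint (A ∪ B) C → (le A B ↔ le (A ∪ C) (B ∪ C)))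

/-- `(A,B)` is a critical pair: disjoint, `A ≺ B`, and no `C` with `A ≺ C ≺ B`. -/
def Critical {n : ℕ} (le : Finset (Fin n) → Finset (Fin n) → Prop)
    (A B : Finset (Fin n)) : Prop :=
  Disjoint A B ∧ cpLT le A B ∧ ¬ ∃ C, cpLT le A C ∧ cpLT le C B

/-- `(A,B)` is a flippable pair: critical, and for every `D` disjoint from
`A ∪ B` the pair `(A ∪ D, B ∪ D)` is adjacent. -/
def Flippable {n : ℕ} (le : Finset (Fin n) → Finset (Fin n) → Prop)
    (A B : Finset (Fin n)) : Prop :=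
  Critical le A B ∧
  ∀ D : Finset (Fin n), Disjoint D (A ∪ B) →
    ¬ ∃ C, cpLT le (A ∪ D) C ∧ cpLT le C (B ∪ D)

/-- The set of flippable pairs of an order. -/
def FlippablePairs {n : ℕ} (le : Finset (Fin n) → Finset (Fin n) → Prop) :
    Set (Finset (Fin n) × Finset (Fin n)) :=
  {p | Flippable le p.1 p.2}

/-- `le` is (additively) representable by a positive utility vector. -/
def Representable {n : ℕ} (le : Finset (Fin n) → Finset (Fin n) → Prop) : Prop :=
  ∃ u : Fin n → ℝ, (∀ i, 0 < u i) ∧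
    ∀ A B : Finset (Fin n), le A B ↔ ∑ i ∈ A, u i ≤ ∑ i ∈ B, u i

/-- `(X, Y) = (A ∪ D, B ∪ D)` for some `D` disjoint from `A ∪ B`. -/
def FlipRel {n : ℕ} (A B X Y : Finset (Fin n)) : Prop :=
  ∃ D : Finset (Fin n), Disjoint D (A ∪ B) ∧ X = A ∪ D ∧ Y = B ∪ D

/-- The relation obtained from `le` by flipping over the pair `(A,B)`:
all comparisons between `A ∪ D` and `B ∪ D` (for `D` disjoint from `A ∪ B`)
are reversed, all other comparisons are kept. -/
def flipOrder {n : ℕ} (le : Finset (Fin n) → Finset (Fin n) → Prop)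
    (A B : Finset (Fin n)) : Finset (Fin n) → Finset (Fin n) → Prop :=
  fun X Y => (le X Y ∧ ¬ FlipRel A B X Y) ∨ FlipRel A B Y X

/-- Utility (sum of weights) of a subset. -/
def usum {k : ℕ} (m : Fin k → ℕ) (A : Finset (Fin k)) : ℕ := ∑ i ∈ A, m i

/-- The order on subsets induced by a utility vector. -/
def uord {k : ℕ} (m : Fin k → ℕ) : Finset (Fin k) → Finset (Fin k) → Prop :=
  fun A B => usum m A ≤ usum m B

/-- The utility vector on `[n+1]` (element `k` corresponds to index `k-1`):
`m_k = 2^k` for `k < j`, `m_j = q`, and `m_k = 2^(k-1)` for `k > j`. -/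
def mq (n q j : ℕ) : Fin (n + 1) → ℕ := fun i =>
  if (i : ℕ) + 1 < j then 2 ^ ((i : ℕ) + 1)
  else if (i : ℕ) + 1 = j then q
  else 2 ^ (i : ℕ)

/-!
Deleting `j` from `mq n q j` leaves the weights `2, 4, …, 2 ^ n`. Hence the utilities of the sets
without `j` are exactly the even numbers below `2 ^ (n + 1)`, those of the sets with `j` are their
translates by the odd number `q`, and the parity of `u(S)` says whether `j ∈ S`.

If `j` lies in exactly one of `A`, `B`, the odd gap `u(B) - u(A)` cannot be larger than `1`, since
then some utility lies strictly between. A gap of `1` survives every translation by a set `D`, and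
this is flippability. If `j` lies in neither set, criticality forces `u(A) + 1`, which is odd, to be
unattained, so `u(A) + 1 < q`; translating by `{j}` then exposes the even number `q + u(A) + 1`
strictly between, and this is attained because it is less than `2 q < 2 ^ (n + 1)`.
-/

section InducedOrder

variable {k : ℕ} {m : Fin k → ℕ} {A B C D : Finset (Fin k)}

lemma cpLT_uord_of_usum_lt (h : usum m A < usum m B) : cpLT (uord m) A B :=
  ⟨h.le, fun hAB => h.ne (congrArg (usum m) hAB)⟩

lemma cpLT_uord_iff (hm : Function.Injective (usum m)) :
    cpLT (uord m) A B ↔ usum m A < usum m B :=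
  ⟨fun h => lt_of_le_of_ne h.1 (hm.ne h.2), cpLT_uord_of_usum_lt⟩

lemma usum_union (h : Disjoint A B) : usum m (A ∪ B) = usum m A + usum m B :=
  sum_union h

lemma Critical.usum_le_of_usum_lt (hcrit : Critical (uord m) A B) (h : usum m A < usum m C) :
    usum m B ≤ usum m C := by
  by_contra! hCB
  exact hcrit.2.2 ⟨C, cpLT_uord_of_usum_lt h, cpLT_uord_of_usum_lt hCB⟩

lemma Flippable.usum_add_le_of_usum_add_lt (hflip : Flippable (uord m) A B)
    (hD : Disjoint D (A ∪ B)) (h : usum m A + usum m D < usum m C) :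
    usum m B + usum m D ≤ usum m C := by
  by_contra! hCB
  obtain ⟨hDA, hDB⟩ := disjoint_union_right.1 hD
  rw [← usum_union hDA.symm] at h
  rw [← usum_union hDB.symm] at hCB
  exact hflip.2 D hD ⟨C, cpLT_uord_of_usum_lt h, cpLT_uord_of_usum_lt hCB⟩

lemma Critical.flippable_of_usum_eq_add_one (hm : Function.Injective (usum m))
    (hcrit : Critical (uord m) A B) (h : usum m B = usum m A + 1) : Flippable (uord m) A B := by
  refine ⟨hcrit, ?_⟩
  rintro D hD ⟨C, hAC, hCB⟩
  obtain ⟨hDA, hDB⟩ := disjoint_union_right.1 hD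
  rw [cpLT_uord_iff hm, usum_union hDA.symm] at hAC
  rw [cpLT_uord_iff hm, usum_union hDB.symm] at hCB
  omega

end InducedOrder

section PowersOfTwo

variable {n : ℕ}

lemma usum_two_pow_eq_sum_map (T : Finset (Fin n)) :
    usum (fun k : Fin n => 2 ^ (k : ℕ)) T = ∑ k ∈ T.map Fin.valEmbedding, 2 ^ k :=
  (sum_map T Fin.valEmbedding (fun k => 2 ^ k)).symm

lemma usum_two_pow_lt (T : Finset (Fin n)) : usum (fun k : Fin n => 2 ^ (k : ℕ)) T < 2 ^ n := by
  rw [usum_two_pow_eq_sum_map]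
  exact Nat.geomSum_lt le_rfl (by simp)

lemma usum_two_pow_injective : Function.Injective (usum fun k : Fin n => 2 ^ (k : ℕ)) := by
  intro S T h
  rw [usum_two_pow_eq_sum_map, usum_two_pow_eq_sum_map] at h
  exact map_injective _ (geomSum_injective le_rfl h)

lemma exists_usum_two_pow_eq {v : ℕ} (hv : v < 2 ^ n) :
    ∃ T, usum (fun k : Fin n => 2 ^ (k : ℕ)) T = v := by
  let f (T : Finset (Fin n)) : Fin (2 ^ n) := ⟨_, usum_two_pow_lt T⟩
  have hinj : Function.Injective f := fun S T h => usum_two_pow_injective (Fin.val_eq_of_eq h)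
  have hbij : Function.Bijective f :=
    (Fintype.bijective_iff_injective_and_card f).2 ⟨hinj, by simp⟩
  obtain ⟨T, hT⟩ := hbij.surjective ⟨v, hv⟩
  exact ⟨T, congrArg Fin.val hT⟩

end PowersOfTwo

lemma usum_eq_add_usum_succAbove {n : ℕ} (m : Fin (n + 1) → ℕ) (J : Fin (n + 1))
    (S : Finset (Fin (n + 1))) :
    usum m S = (if J ∈ S then m J else 0) + usum (m ∘ J.succAbove) {k | J.succAbove k ∈ S} := by
  have hsum : usum m S = ∑ i, if i ∈ S then m i else 0 := by simp [usum]
  rw [hsum, Fin.sum_univ_succAbove _ J, usum, sum_filter]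
  rfl

section InsertedWeight

variable {n q : ℕ} {J : Fin (n + 1)} {A B S : Finset (Fin (n + 1))}

lemma mq_self : mq n q (J + 1) J = q := by
  simp [mq]

lemma mq_succAbove (k : Fin n) : mq n q (J + 1) (J.succAbove k) = 2 * 2 ^ (k : ℕ) := by
  rcases lt_or_ge k.castSucc J with h | h
  · have hk : (k : ℕ) < J := h
    simp [mq, Fin.succAbove_of_castSucc_lt _ _ h, hk, pow_succ']
  · have hk : (J : ℕ) ≤ k := h
    simp [mq, Fin.succAbove_of_le_castSucc _ _ h, Nat.not_lt.2 (hk.trans (Nat.le_succ _)),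
      (Nat.lt_succ_of_le hk).ne', pow_succ']

lemma usum_mq_comp_succAbove (T : Finset (Fin n)) :
    usum (mq n q (J + 1) ∘ J.succAbove) T = 2 * usum (fun k : Fin n => 2 ^ (k : ℕ)) T := by
  simp only [usum, Function.comp_apply, mq_succAbove, mul_sum]

lemma usum_mq_eq (S : Finset (Fin (n + 1))) :
    usum (mq n q (J + 1)) S = (if J ∈ S then q else 0)
      + 2 * usum (fun k : Fin n => 2 ^ (k : ℕ)) {k | J.succAbove k ∈ S} := by
  rw [usum_eq_add_usum_succAbove _ J, mq_self, usum_mq_comp_succAbove]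

lemma odd_usum_mq_iff (hodd : Odd q) : Odd (usum (mq n q (J + 1)) S) ↔ J ∈ S := by
  rw [usum_mq_eq]
  split_ifs with hJ <;> simp [hJ, hodd, Nat.odd_add]

lemma even_usum_mq_iff (hodd : Odd q) : Even (usum (mq n q (J + 1)) S) ↔ J ∉ S := by
  rw [← Nat.not_odd_iff_even, odd_usum_mq_iff hodd]

lemma usum_mq_injective (hodd : Odd q) : Function.Injective (usum (mq n q (J + 1))) := by
  intro S T h
  have hJ : J ∈ S ↔ J ∈ T := by
    rw [← odd_usum_mq_iff (q := q) hodd, h, odd_usum_mq_iff hodd]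
  have htrace : ({k | J.succAbove k ∈ S} : Finset (Fin n)) =
      ({k | J.succAbove k ∈ T} : Finset (Fin n)) := by
    rw [usum_mq_eq, usum_mq_eq, if_congr hJ rfl rfl] at h
    exact usum_two_pow_injective (by omega)
  ext i
  rcases Fin.eq_self_or_eq_succAbove J i with rfl | ⟨k, rfl⟩
  · exact hJ
  · simpa using Finset.ext_iff.1 htrace k

lemma usum_mq_lt_of_notMem (hJ : J ∉ S) : usum (mq n q (J + 1)) S < 2 ^ (n + 1) := by
  rw [usum_mq_eq, if_neg hJ, zero_add, pow_succ']
  gcongr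
  exact usum_two_pow_lt _

lemma usum_mq_lt : usum (mq n q (J + 1)) S < q + 2 ^ (n + 1) := by
  have hlt := usum_two_pow_lt {k | J.succAbove k ∈ S}
  rw [usum_mq_eq]
  split_ifs <;> omega

variable (q J) in
lemma exists_usum_mq_eq_of_even {x : ℕ} (hx : Even x) (hlt : x < 2 ^ (n + 1)) :
    ∃ S, J ∉ S ∧ usum (mq n q (J + 1)) S = x := by
  obtain ⟨v, rfl⟩ := even_iff_two_dvd.1 hx
  obtain ⟨T, hT⟩ := exists_usum_two_pow_eq (n := n) (v := v) (by omega)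
  refine ⟨T.map J.succAboveEmb, by simp [Fin.succAbove_ne], ?_⟩
  rw [← hT, ← usum_mq_comp_succAbove (q := q) (J := J)]
  exact sum_map ..

variable (J) in
lemma exists_usum_mq_eq_of_odd {x : ℕ} (hodd : Odd q) (hx : Odd x) (hqx : q ≤ x)
    (hlt : x < q + 2 ^ (n + 1)) : ∃ S, usum (mq n q (J + 1)) S = x := by
  obtain ⟨S, hJS, hS⟩ := exists_usum_mq_eq_of_even q J (Nat.Odd.sub_odd hx hodd) (by omega)
  refine ⟨insert J S, ?_⟩
  rw [usum, sum_insert hJS, mq_self, ← usum, hS]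
  omega

lemma xor_mem_iff_odd_usum_mq_add (hodd : Odd q) :
    Xor (J ∈ A) (J ∈ B) ↔ Odd (usum (mq n q (J + 1)) A + usum (mq n q (J + 1)) B) := by
  rw [← odd_usum_mq_iff (q := q) hodd, ← odd_usum_mq_iff (q := q) hodd, Nat.odd_add,
    ← Nat.not_odd_iff_even, xor_iff_iff_not]

lemma Critical.usum_mq_le_add_one_of_xor_mem (hodd : Odd q) (hqn : q < 2 ^ n)
    (hcrit : Critical (uord (mq n q (J + 1))) A B) (hxor : Xor (J ∈ A) (J ∈ B)) :
    usum (mq n q (J + 1)) B ≤ usum (mq n q (J + 1)) A + 1 := by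
  by_contra! hgap
  suffices ∃ C, usum (mq n q (J + 1)) A < usum (mq n q (J + 1)) C ∧
      usum (mq n q (J + 1)) C < usum (mq n q (J + 1)) B by
    obtain ⟨C, hAC, hCB⟩ := this
    exact hCB.not_ge (hcrit.usum_le_of_usum_lt hAC)
  rcases hxor with ⟨hJA, hJB⟩ | ⟨hJB, hJA⟩
  · have hA_odd := (odd_usum_mq_iff hodd).2 hJA
    have hB_lt : usum (mq n q (J + 1)) B < 2 ^ (n + 1) := usum_mq_lt_of_notMem hJB
    obtain ⟨C, -, hC⟩ := exists_usum_mq_eq_of_even q J hA_odd.add_one (by omega)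
    exact ⟨C, by omega⟩
  · have hA_even := (even_usum_mq_iff hodd).2 hJA
    have hB_odd := (odd_usum_mq_iff hodd).2 hJB
    have hB_lt : usum (mq n q (J + 1)) B < q + 2 ^ (n + 1) := usum_mq_lt
    rcases le_or_gt q (usum (mq n q (J + 1)) A + 1) with hq | hq
    · obtain ⟨C, hC⟩ := exists_usum_mq_eq_of_odd J hodd hA_even.add_one hq (by omega)
      exact ⟨C, by omega⟩
    · -- `u(A) + 1` is unattained, but `u(A) + 2` is, and it differs from the odd number `u(B)`.
      obtain ⟨C, -, hC⟩ := exists_usum_mq_eq_of_even q J (hA_even.add even_two) (by omega)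
      exact ⟨C, by grind⟩

lemma Critical.usum_mq_eq_add_one_iff (hodd : Odd q) (hqn : q < 2 ^ n)
    (hcrit : Critical (uord (mq n q (J + 1))) A B) :
    usum (mq n q (J + 1)) B = usum (mq n q (J + 1)) A + 1 ↔ Xor (J ∈ A) (J ∈ B) := by
  constructor
  · intro h
    rw [xor_mem_iff_odd_usum_mq_add (q := q) hodd, h, ← add_assoc]
    exact (Even.add_self _).add_one
  · intro hxor
    have hlt := (cpLT_uord_iff (usum_mq_injective hodd)).1 hcrit.2.1
    exact le_antisymm (hcrit.usum_mq_le_add_one_of_xor_mem hodd hqn hxor) hlt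

lemma Critical.usum_mq_add_one_lt_of_notMem (hodd : Odd q)
    (hcrit : Critical (uord (mq n q (J + 1))) A B) (hJA : J ∉ A) (hJB : J ∉ B) :
    usum (mq n q (J + 1)) A + 1 < q := by
  have hA_even := (even_usum_mq_iff hodd).2 hJA
  have hB_even := (even_usum_mq_iff hodd).2 hJB
  have hA_lt : usum (mq n q (J + 1)) A < 2 ^ (n + 1) := usum_mq_lt_of_notMem hJA
  have hlt := (cpLT_uord_iff (usum_mq_injective hodd)).1 hcrit.2.1
  by_contra! hq
  obtain ⟨C, hC⟩ := exists_usum_mq_eq_of_odd J hodd hA_even.add_one hq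
    (by have := hodd.pos; omega)
  have hBC := hcrit.usum_le_of_usum_lt (C := C) (by omega)
  grind

lemma Flippable.xor_mem (hodd : Odd q) (hqn : q < 2 ^ n)
    (hflip : Flippable (uord (mq n q (J + 1))) A B) : Xor (J ∈ A) (J ∈ B) := by
  by_contra hxor
  obtain ⟨hJA, hJB⟩ : J ∉ A ∧ J ∉ B := by
    have hdisj : J ∈ A → J ∉ B := fun hJA => disjoint_left.1 hflip.1.1 hJA
    rw [not_xor] at hxor
    tauto
  have hA_even := (even_usum_mq_iff hodd).2 hJA
  have hB_even := (even_usum_mq_iff hodd).2 hJB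
  have hlt := (cpLT_uord_iff (usum_mq_injective hodd)).1 hflip.1.2.1
  have hA_lt_q := hflip.1.usum_mq_add_one_lt_of_notMem hodd hJA hJB
  have hsingleton : usum (mq n q (J + 1)) {J} = q := by rw [usum, sum_singleton, mq_self]
  obtain ⟨C, -, hC⟩ := exists_usum_mq_eq_of_even q J (hA_even.add_odd hodd).add_one (by omega)
  have hBC := hflip.usum_add_le_of_usum_add_lt (D := {J}) (C := C) (by simp [hJA, hJB]) (by omega)
  grind

lemma Critical.flippable_mq_iff (hodd : Odd q) (hqn : q < 2 ^ n)
    (hcrit : Critical (uord (mq n q (J + 1))) A B) :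
    Flippable (uord (mq n q (J + 1))) A B ↔
      usum (mq n q (J + 1)) B = usum (mq n q (J + 1)) A + 1 :=
  ⟨fun hflip => (hcrit.usum_mq_eq_add_one_iff hodd hqn).2 (hflip.xor_mem hodd hqn),
    hcrit.flippable_of_usum_eq_add_one (usum_mq_injective hodd)⟩

end InsertedWeight

lemma exists_fin_eq_val_add_one {n q j : ℕ} (hqn : q < 2 ^ n) (hj1 : 2 ^ (j - 1) ≤ q)
    (hj2 : q < 2 ^ j) : ∃ J : Fin (n + 1), j = J + 1 := by
  have hj : j - 1 < n := (Nat.pow_lt_pow_iff_right one_lt_two).1 (hj1.trans_lt hqn)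
  have hj0 : j - 1 < j := (Nat.pow_lt_pow_iff_right one_lt_two).1 (hj1.trans_lt hj2)
  exact ⟨⟨j - 1, by omega⟩, (Nat.sub_add_cancel (by omega)).symm⟩

theorem stmt8_general {n q : ℕ} (hodd : Odd q) (hqn : q < 2 ^ n) (J : Fin (n + 1))
    (A B : Finset (Fin (n + 1))) (hcrit : Critical (uord (mq n q (J + 1))) A B) :
    (Flippable (uord (mq n q (J + 1))) A B ↔ Xor (J ∈ A) (J ∈ B)) ∧
    (Flippable (uord (mq n q (J + 1))) A B ↔
      usum (mq n q (J + 1)) B = usum (mq n q (J + 1)) A + 1) :=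
  ⟨(hcrit.flippable_mq_iff hodd hqn).trans (hcrit.usum_mq_eq_add_one_iff hodd hqn),
    hcrit.flippable_mq_iff hodd hqn⟩

/-- For a critical pair `(A,B)` of `≼_{mq n q j}` the following are equivalent:
(a) `(A,B)` is flippable; (b) exactly one of `A`, `B` contains the element `j`;
(c) `u(B) − u(A) = 1`. -/
theorem stmt8 {n q j : ℕ} (hq0 : 0 < q) (hodd : Odd q) (hqn : q < 2 ^ n)
    (hj1 : 2 ^ (j - 1) ≤ q) (hj2 : q < 2 ^ j)
    (A B : Finset (Fin (n + 1))) (hcrit : Critical (uord (mq n q j)) A B) :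
    (Flippable (uord (mq n q j)) A B ↔
      Xor' (∃ i ∈ A, (i : ℕ) + 1 = j) (∃ i ∈ B, (i : ℕ) + 1 = j)) ∧
    (Flippable (uord (mq n q j)) A B ↔
      usum (mq n q j) B = usum (mq n q j) A + 1) := by
  obtain ⟨J, rfl⟩ := exists_fin_eq_val_add_one hqn hj1 hj2
  simp only [Nat.add_right_cancel_iff, Fin.val_inj, exists_eq_right]
  exact stmt8_general hodd hqn J A B hcrit
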